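/- Let n ≥ 1, let X be a complex Banach space that is uniformly c-convex with modulus Ω, where Ω is moreover a Dini majorant, and let α ∈ (0,1]. If f : 𝔹ⁿ → X is holomorphic and the real-valued function z ↦ ‖f(z)‖ belongs to Λ_α(𝔹ⁿ, ℝ), then f is uniformly continuous on 𝔹ⁿ and extends to a continuous map on the closed unit ball of ℂⁿ. -/

import Mathlib

/-! A Hardy–Littlewood argument: the modulus of `c`-convexity bounds the derivative of `f` by an
integrable function of the distance to the sphere.

Let `F` be holomorphic on the closed unit disc with `‖F‖ ≤ K` on the circle. Integrating `F` against
the nonnegative kernel `1 + Re (lam * conj w)`, of mean one, gives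
`‖F 0 + (lam / 2) • F' 0‖ ≤ K` for `‖lam‖ ≤ 1` (`norm_add_half_deriv_le`). Take for `F` the
restriction of `f` to the disc of radius `r / 2` about `z` in the direction `v`, where
`r ≤ 1 - ‖z‖`. By the Hölder hypothesis on `‖f‖` one may use `K = ‖f z‖ + c * r ^ α`, so uniform
`c`-convexity, applied to `f z` and a multiple of `fderiv ℂ f z v`, yields
`r * ‖fderiv ℂ f z v‖ ≤ 4 * B * Ω (c / B * r ^ α)`, where `B` bounds `‖f‖`
(`mul_norm_fderiv_le`); that `t ↦ Ω t / t` is nonincreasing makes this uniform in `‖f z‖`.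

Put `D x = ∫ t in 0..x, Ω t / t`, which is finite by the Dini condition. The right side divided by
`r = 1 - t` is, up to a constant, the derivative of `t ↦ - D (c / B * (1 - t) ^ α)`. Hence
`‖f z - f (ρ • z)‖` is at most a constant times `D (c / B * (1 - ρ) ^ α)`
(`norm_sub_radial_le`), uniformly in `z`, and this tends to `0` as `ρ → 1`. So `f` is a uniform
limit on the ball of the dilates `z ↦ f (ρ • z)`, each uniformly continuous because it is continuous
on the compact closed ball. A uniformly continuous map into a complete space extends continuously
to the closure.
-/

open Metric Set Filter

/-- A majorant: continuous, increasing, vanishing at `0`, with `t ↦ ω t / t`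
nonincreasing on `(0, ∞)`. -/
def Majorant (ω : ℝ → ℝ) : Prop :=
  ContinuousOn ω (Set.Ici 0) ∧ MonotoneOn ω (Set.Ici 0) ∧ ω 0 = 0 ∧
    AntitoneOn (fun t => ω t / t) (Set.Ioi 0)

/-- A Dini majorant: a majorant with `∫₀¹ ω t / t dt < ∞`. -/
def DiniMajorant (ω : ℝ → ℝ) : Prop :=
  Majorant ω ∧ MeasureTheory.IntegrableOn (fun t => ω t / t) (Set.Ioc 0 1)

open scoped Topology Real

/-! ### Derivative estimate -/

/-- The first Taylor coefficient at half weight stays within the sup norm: Fejér's kernel of degree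
one is nonnegative with mean one. -/
theorem norm_add_half_deriv_le {X : Type*} [NormedAddCommGroup X] [NormedSpace ℂ X]
    [CompleteSpace X] {F : ℂ → X} (hF : DiffContOnCl ℂ F (ball 0 1)) {K : ℝ}
    (hK : ∀ w ∈ sphere (0 : ℂ) 1, ‖F w‖ ≤ K) {lam : ℂ} (hlam : ‖lam‖ ≤ 1) :
    ‖F 0 + (lam / 2) • deriv F 0‖ ≤ K := by
  have hcont : ContinuousOn F (sphere 0 1) := by
    have := hF.continuousOn_ball
    exact this.mono sphere_subset_closedBall
  have hne : ∀ w ∈ sphere (0 : ℂ) 1, w ≠ 0 := by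
    rintro w hw rfl
    simp at hw
  have h0 := hF.circleIntegral_sub_inv_smul (w := 0) (by simp)
  have h1 := Complex.circleIntegral_one_div_sub_center_pow_smul_of_differentiable_on_off_countable
    (f := F) (c := 0) (R := 1) one_pos 1 countable_empty hF.continuousOn_ball
    (fun x hx => hF.differentiableAt isOpen_ball hx.1)
  have h2 := hF.circleIntegral_eq_zero zero_le_one
  have i0 : CircleIntegrable (fun w => (w - 0)⁻¹ • F w) 0 1 := by
    refine ContinuousOn.circleIntegrable zero_le_one (ContinuousOn.smul ?_ hcont)
    exact ContinuousOn.inv₀ (by fun_prop) (by simpa using hne)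
  have i1 : CircleIntegrable (fun w => (lam / 2) • ((1 / (w - 0) ^ (1 + 1)) • F w)) 0 1 := by
    refine ContinuousOn.circleIntegrable zero_le_one
      (ContinuousOn.const_smul (ContinuousOn.smul ?_ hcont) _)
    exact ContinuousOn.div (by fun_prop) (by fun_prop) (by simpa using hne)
  have i2 : CircleIntegrable (fun w => (starRingEnd ℂ lam / 2) • F w) 0 1 :=
    (hcont.const_smul _).circleIntegrable zero_le_one
  have i01 : CircleIntegrable
      (fun w => (w - 0)⁻¹ • F w + (lam / 2) • ((1 / (w - 0) ^ (1 + 1)) • F w)) 0 1 := i0.add i1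
  -- The kernel is the nonnegative function `1 + Re (lam * conj w)` of mean one on the circle.
  have key : Real.circleAverage
      (fun w : ℂ => (1 + lam.re * w.re + lam.im * w.im) • F w) 0 1
      = F 0 + (lam / 2) • deriv F 0 := by
    rw [Real.circleAverage_eq_circleIntegral one_ne_zero]
    have : ∮ w in C(0, 1), (w - 0)⁻¹ • ((1 + lam.re * w.re + lam.im * w.im) • F w)
        = ∮ w in C(0, 1), ((w - 0)⁻¹ • F w + (lam / 2) • ((1 / (w - 0) ^ (1 + 1)) • F w))
          + (starRingEnd ℂ lam / 2) • F w := by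
      refine circleIntegral.integral_congr zero_le_one fun w hw => ?_
      have hw0 := hne w hw
      have hwc : w * starRingEnd ℂ w = 1 := by
        rw [Complex.mul_conj, Complex.normSq_eq_norm_sq]
        simp only [mem_sphere_iff_norm, sub_zero] at hw
        simp [hw]
      have hre : ((1 + lam.re * w.re + lam.im * w.im : ℝ) : ℂ)
          = 1 + (lam * starRingEnd ℂ w + starRingEnd ℂ lam * w) / 2 := by
        apply Complex.ext <;> simp <;> ring
      have hinv : starRingEnd ℂ w = w⁻¹ := eq_inv_of_mul_eq_one_right hwc
      simp only [sub_zero]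
      rw [← Complex.coe_smul, hre, hinv, smul_smul, smul_smul, ← add_smul, ← add_smul]
      congr 1
      field_simp
      ring
    rw [this, circleIntegral.integral_add i01 i2,
      circleIntegral.integral_add i0 i1, circleIntegral.integral_smul,
      circleIntegral.integral_smul, h0, h1, h2]
    simp only [smul_zero, add_zero, smul_add, Nat.factorial_one, Nat.cast_one, div_one,
      iteratedDeriv_one, smul_comm (lam / 2)]
    rw [inv_smul_smul₀ Complex.two_pi_I_ne_zero, inv_smul_smul₀ Complex.two_pi_I_ne_zero]
  rw [← key, Real.circleAverage_def, norm_smul]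
  have hΩint : ‖∫ θ in (0 : ℝ)..2 * π, (1 + lam.re * (circleMap 0 1 θ).re
        + lam.im * (circleMap 0 1 θ).im) • F (circleMap 0 1 θ)‖
      ≤ ∫ θ in (0 : ℝ)..2 * π, (1 + lam.re * Real.cos θ + lam.im * Real.sin θ) * K := by
    refine intervalIntegral.norm_integral_le_of_norm_le Real.two_pi_pos.le ?_
      (Continuous.intervalIntegrable (by fun_prop) _ _)
    refine Eventually.of_forall fun θ _ => ?_
    have hre : (circleMap 0 1 θ).re = Real.cos θ := by simp [circleMap, Complex.exp_ofReal_mul_I_re]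
    have him : (circleMap 0 1 θ).im = Real.sin θ := by simp [circleMap, Complex.exp_ofReal_mul_I_im]
    have hP : 0 ≤ 1 + lam.re * Real.cos θ + lam.im * Real.sin θ := by
      have h1 : lam.re ^ 2 + lam.im ^ 2 ≤ 1 := by
        have := Complex.sq_norm lam
        rw [Complex.normSq_apply] at this
        nlinarith [norm_nonneg lam]
      nlinarith [Real.sin_sq_add_cos_sq θ, sq_nonneg (lam.re + Real.cos θ),
        sq_nonneg (lam.im + Real.sin θ)]
    rw [norm_smul, hre, him, Real.norm_of_nonneg hP]
    exact mul_le_mul_of_nonneg_left (hK _ (circleMap_mem_sphere _ zero_le_one _)) hP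
  have hval : ∫ θ in (0 : ℝ)..2 * π, (1 + lam.re * Real.cos θ + lam.im * Real.sin θ) * K
      = 2 * π * K := by
    rw [intervalIntegral.integral_mul_const, intervalIntegral.integral_add,
      intervalIntegral.integral_add]
    · simp
    all_goals exact Continuous.intervalIntegrable (by fun_prop) _ _
  rw [hval] at hΩint
  rw [Real.norm_of_nonneg (by positivity)]
  calc (2 * π)⁻¹ * _ ≤ (2 * π)⁻¹ * (2 * π * K) := by gcongr
    _ = K := by field_simp

/-- The homogeneous form of uniform `c`-convexity, with a bound depending on `x` only through an
upper bound `B` for `‖x‖`. The assumption `t ≤ Ω t` handles `x = 0`. -/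
theorem norm_le_mul_modulus {X : Type*} [NormedAddCommGroup X] [NormedSpace ℂ X] {Ω : ℝ → ℝ}
    (hanti : AntitoneOn (fun t => Ω t / t) (Ioi 0)) (hid : ∀ t, 0 < t → t ≤ Ω t)
    (hucc : ∀ x y : X, ‖x‖ = 1 → ∀ δ : ℝ, 0 < δ →
      (∀ lam : ℂ, ‖lam‖ ≤ 1 → ‖x + lam • y‖ ≤ 1 + δ) → ‖y‖ ≤ Ω δ)
    {x y : X} {B s : ℝ} (hB : 0 < B) (hxB : ‖x‖ ≤ B) (hs : 0 < s)
    (h : ∀ lam : ℂ, ‖lam‖ ≤ 1 → ‖x + lam • y‖ ≤ ‖x‖ + s) : ‖y‖ ≤ B * Ω (s / B) := by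
  rcases eq_or_ne x 0 with rfl | hx
  · have h1 := h 1 (by simp)
    simp only [zero_add, one_smul, norm_zero] at h1
    calc ‖y‖ ≤ s := h1
      _ = B * (s / B) := by field_simp
      _ ≤ B * Ω (s / B) := by gcongr; exact hid _ (by positivity)
  · have hM : 0 < ‖x‖ := norm_pos_iff.2 hx
    set M := ‖x‖ with hMdef
    have hnorm : ∀ u : X, ‖((M⁻¹ : ℝ) : ℂ) • u‖ = ‖u‖ / M := fun u => by
      rw [norm_smul, Complex.norm_real, Real.norm_of_nonneg (by positivity)]
      field_simp
    have h1 := hucc (((M⁻¹ : ℝ) : ℂ) • x) (((M⁻¹ : ℝ) : ℂ) • y)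
      (by rw [hnorm, ← hMdef, div_self hM.ne']) (s / M) (by positivity) (fun lam hl => by
        rw [smul_comm, ← smul_add, hnorm, div_le_iff₀ hM]
        calc _ ≤ M + s := h lam hl
          _ = _ := by field_simp)
    rw [hnorm, div_le_iff₀ hM] at h1
    have h2 := hanti (a := s / B) (b := s / M) (mem_Ioi.2 (by positivity))
      (mem_Ioi.2 (by positivity)) (by gcongr)
    calc ‖y‖ ≤ Ω (s / M) * M := h1
      _ = s * (Ω (s / M) / (s / M)) := by field_simp
      _ ≤ s * (Ω (s / B) / (s / B)) := by gcongr
      _ = B * Ω (s / B) := by field_simp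

/-- A Hölder bound on `‖f‖` controls the derivative of `f` at distance at least `r` from the sphere. -/
theorem mul_norm_fderiv_le {E X : Type*} [NormedAddCommGroup E] [NormedSpace ℂ E]
    [NormedAddCommGroup X] [NormedSpace ℂ X] [CompleteSpace X] {Ω : ℝ → ℝ}
    (hanti : AntitoneOn (fun t => Ω t / t) (Ioi 0)) (hid : ∀ t, 0 < t → t ≤ Ω t)
    (hucc : ∀ x y : X, ‖x‖ = 1 → ∀ δ : ℝ, 0 < δ →
      (∀ lam : ℂ, ‖lam‖ ≤ 1 → ‖x + lam • y‖ ≤ 1 + δ) → ‖y‖ ≤ Ω δ)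
    {α : ℝ} (hα0 : 0 < α) {f : E → X} (hf : DifferentiableOn ℂ f (ball 0 1))
    {c B : ℝ} (hc : 0 < c) (hB : 0 < B) (hfB : ∀ z ∈ ball (0 : E) 1, ‖f z‖ ≤ B)
    (hΛ : ∀ z ∈ ball (0 : E) 1, ∀ w ∈ ball (0 : E) 1, |‖f z‖ - ‖f w‖| ≤ c * ‖z - w‖ ^ α)
    {z v : E} {r : ℝ} (hr : 0 < r) (hzr : ‖z‖ + r ≤ 1) (hv : ‖v‖ ≤ 1) :
    r * ‖fderiv ℂ f z v‖ ≤ 4 * B * Ω (c / B * r ^ α) := by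
  -- The radius `r / 2` keeps the closed disc inside the open ball.
  set u : E := ((r / 2 : ℝ) : ℂ) • v with hu
  have hun : ‖u‖ ≤ r / 2 := by
    rw [hu, norm_smul, Complex.norm_real, Real.norm_of_nonneg (by positivity)]
    exact mul_le_of_le_one_right (by positivity) hv
  have hz : z ∈ ball (0 : E) 1 := by rw [mem_ball_zero_iff]; linarith
  have hline : ∀ w ∈ closedBall (0 : ℂ) 1, ‖w • u‖ ≤ r / 2 := fun w hw => by
    rw [mem_closedBall_zero_iff] at hw
    rw [norm_smul]
    calc _ ≤ 1 * (r / 2) := by gcongr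
      _ = _ := one_mul _
  have hmaps : ∀ w ∈ closedBall (0 : ℂ) 1, z + w • u ∈ ball (0 : E) 1 := fun w hw => by
    rw [mem_ball_zero_iff]
    linarith [norm_add_le z (w • u), hline w hw]
  set F : ℂ → X := fun w => f (z + w • u) with hF
  have hFd : DifferentiableOn ℂ F (closedBall 0 1) :=
    hf.comp (by fun_prop) hmaps
  have hFcl : DiffContOnCl ℂ F (ball 0 1) := by
    refine DifferentiableOn.diffContOnCl ?_
    rwa [closure_ball _ one_ne_zero]
  have hderiv : deriv F 0 = ((r / 2 : ℝ) : ℂ) • fderiv ℂ f z v := by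
    have h1 : HasFDerivAt f (fderiv ℂ f z) (z + (0 : ℂ) • u) := by
      rw [zero_smul, add_zero]
      exact (hf.differentiableAt (isOpen_ball.mem_nhds hz)).hasFDerivAt
    have h2 : HasDerivAt (fun w : ℂ => z + w • u) u 0 := by
      simpa using ((hasDerivAt_id (0 : ℂ)).smul_const u).const_add z
    have h3 : HasDerivAt F (fderiv ℂ f z u) 0 := h1.comp_hasDerivAt (0 : ℂ) h2
    rw [h3.deriv, hu, map_smul]
  have hK : ∀ w ∈ sphere (0 : ℂ) 1, ‖F w‖ ≤ ‖f z‖ + c * r ^ α := fun w hw => by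
    have hw' := sphere_subset_closedBall hw
    have h1 := (abs_le.1 (hΛ _ (hmaps w hw') z hz)).2
    have h2 : ‖z + w • u - z‖ ^ α ≤ r ^ α := by
      rw [add_sub_cancel_left]
      exact Real.rpow_le_rpow (norm_nonneg _) ((hline w hw').trans (by linarith)) hα0.le
    have := mul_le_mul_of_nonneg_left h2 hc.le
    linarith
  have hmain := norm_le_mul_modulus hanti hid hucc (x := f z)
    (y := (1 / 2 : ℂ) • deriv F 0) (B := B) (s := c * r ^ α) hB (hfB z hz) (by positivity)
    (fun lam hl => by
      have := norm_add_half_deriv_le hFcl hK hl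
      rw [smul_smul, mul_one_div]
      simpa [hF] using this)
  rw [hderiv, norm_smul, norm_smul, Complex.norm_real, Real.norm_of_nonneg (by positivity)] at hmain
  have h12 : ‖(1 / 2 : ℂ)‖ = 1 / 2 := by norm_num
  rw [h12, mul_div_right_comm] at hmain
  linarith

/-! ### Radial integration and uniform continuity -/

/-- Radial integration of the derivative bound, carried out with an explicit primitive of its right
side in place of a change of variables. -/
theorem norm_sub_radial_le {E X : Type*} [NormedAddCommGroup E] [NormedSpace ℂ E]
    [NormedAddCommGroup X] [NormedSpace ℂ X] {Ω : ℝ → ℝ}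
    (hcont : ContinuousOn Ω (Ici 0))
    (hdini : MeasureTheory.IntegrableOn (fun t => Ω t / t) (Ioc 0 1))
    {α : ℝ} (hα0 : 0 < α) {f : E → X} (hf : DifferentiableOn ℂ f (ball 0 1))
    {k C : ℝ} (hk : 0 < k) (hk1 : k ≤ 1)
    (hder : ∀ (z v : E) (r : ℝ), 0 < r → ‖z‖ + r ≤ 1 → ‖v‖ ≤ 1 →
      r * ‖fderiv ℂ f z v‖ ≤ C * Ω (k * r ^ α))
    {z : E} (hz : z ∈ ball (0 : E) 1) {ρ : ℝ} (hρ0 : 0 < ρ) (hρ1 : ρ < 1) :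
    ‖f z - f (ρ • z)‖ ≤ C / α * ∫ t in (0 : ℝ)..(k * (1 - ρ) ^ α), Ω t / t := by
  set D : ℝ → ℝ := fun x => ∫ t in (0 : ℝ)..x, Ω t / t with hD
  rw [mem_ball_zero_iff] at hz
  have hDc : ContinuousOn D (Icc 0 1) := by
    have h := intervalIntegral.continuousOn_primitive_interval (f := fun t => Ω t / t)
      (a := 0) (b := 1) (μ := MeasureTheory.volume)
      (by rwa [uIcc_of_le zero_le_one, integrableOn_Icc_iff_integrableOn_Ioc])
    rwa [uIcc_of_le zero_le_one] at h
  have hco : ContinuousOn (fun t => Ω t / t) (Ioi 0) :=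
    (hcont.mono Ioi_subset_Ici_self).div continuousOn_id fun x hx => (ne_of_gt hx)
  have hDd : ∀ x, 0 < x → x ≤ 1 → HasDerivAt D (Ω x / x) x := fun x hx hx1 => by
    refine intervalIntegral.integral_hasDerivAt_right ?_ ?_ ?_
    · rw [intervalIntegrable_iff_integrableOn_Ioc_of_le hx.le]
      exact hdini.mono_set (Ioc_subset_Ioc_right hx1)
    · exact hco.stronglyMeasurableAtFilter isOpen_Ioi x hx
    · exact hco.continuousAt (Ioi_mem_nhds hx)
  have hball : ∀ t ∈ Icc ρ 1, t • z ∈ ball (0 : E) 1 := fun t ht => by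
    rw [mem_ball_zero_iff, norm_smul, Real.norm_of_nonneg (hρ0.le.trans ht.1)]
    nlinarith [norm_nonneg z, ht.1, ht.2]
  have hs01 : ∀ t ∈ Icc ρ 1, k * (1 - t) ^ α ∈ Icc (0 : ℝ) 1 := fun t ht => by
    have h0 : 0 ≤ 1 - t := by linarith [ht.2]
    have h1 : (1 - t) ^ α ≤ 1 := Real.rpow_le_one h0 (by linarith [ht.1]) hα0.le
    have h2 : 0 ≤ (1 - t) ^ α := Real.rpow_nonneg h0 α
    exact ⟨by positivity, by nlinarith⟩
  have key := image_norm_le_of_norm_deriv_right_le_deriv_boundary' (a := ρ) (b := 1)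
    (f := fun t : ℝ => f (t • z) - f (ρ • z)) (f' := fun t => fderiv ℂ f (t • z) z)
    (B := fun t => C / α * (D (k * (1 - ρ) ^ α) - D (k * (1 - t) ^ α)))
    (B' := fun t => C * Ω (k * (1 - t) ^ α) / (1 - t)) ?_ ?_ (by simp) ?_ ?_ ?_
    (right_mem_Icc.2 hρ1.le)
  · simpa [hD, Real.zero_rpow hα0.ne'] using key
  · exact (hf.continuousOn.comp (by fun_prop) hball).sub continuousOn_const
  · intro t ht
    have h1 := ((hf.differentiableAt
      (isOpen_ball.mem_nhds (hball t ⟨ht.1, ht.2.le⟩))).hasFDerivAt).restrictScalars ℝ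
    have h2 : HasDerivAt (fun s : ℝ => s • z) z t := by
      simpa using (hasDerivAt_id t).smul_const z
    exact ((h1.comp_hasDerivAt t h2).sub_const _).hasDerivWithinAt
  · refine continuousOn_const.mul (continuousOn_const.sub (hDc.comp ?_ hs01))
    exact continuousOn_const.mul
      (ContinuousOn.rpow_const (by fun_prop) fun _ _ => Or.inr hα0.le)
  · intro t ht
    have h0 : 0 < 1 - t := by linarith [ht.2]
    have h1 : HasDerivAt (fun s : ℝ => k * (1 - s) ^ α) (k * (-1 * α * (1 - t) ^ (α - 1))) t :=
      (((hasDerivAt_id t).const_sub 1).rpow_const (Or.inl h0.ne')).const_mul k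
    have h2 := (hDd (k * (1 - t) ^ α) (by positivity) (hs01 t ⟨ht.1, ht.2.le⟩).2).comp t h1
    have h3 := (h2.const_sub (D (k * (1 - ρ) ^ α))).const_mul (C / α)
    refine (h3.congr_deriv ?_).hasDerivWithinAt
    rw [Real.rpow_sub_one h0.ne']
    have : (1 - t) ^ α ≠ 0 := (Real.rpow_pos_of_pos h0 α).ne'
    field_simp
  · intro t ht
    have h0 : 0 < 1 - t := by linarith [ht.2]
    rw [le_div_iff₀ h0, mul_comm]
    refine hder (t • z) z (1 - t) h0 ?_ hz.le
    rw [norm_smul, Real.norm_of_nonneg (hρ0.le.trans ht.1)]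
    nlinarith [norm_nonneg z, ht.1]

theorem uniformContinuousOn_ball_of_radial {E X : Type*} [NormedAddCommGroup E] [NormedSpace ℂ E]
    [ProperSpace E] [NormedAddCommGroup X] [NormedSpace ℂ X] {Ω : ℝ → ℝ}
    (hcont : ContinuousOn Ω (Ici 0))
    (hdini : MeasureTheory.IntegrableOn (fun t => Ω t / t) (Ioc 0 1))
    {α : ℝ} (hα0 : 0 < α) {f : E → X} (hf : DifferentiableOn ℂ f (ball 0 1))
    {k C : ℝ} (hk : 0 < k) (hk1 : k ≤ 1)
    (hder : ∀ (z v : E) (r : ℝ), 0 < r → ‖z‖ + r ≤ 1 → ‖v‖ ≤ 1 →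
      r * ‖fderiv ℂ f z v‖ ≤ C * Ω (k * r ^ α)) :
    UniformContinuousOn f (ball 0 1) := by
  have hlim : Tendsto (fun ρ : ℝ => C / α * ∫ t in (0 : ℝ)..(k * (1 - ρ) ^ α), Ω t / t)
      (𝓝[<] 1) (𝓝 0) := by
    have h := intervalIntegral.continuousOn_primitive_interval (f := fun t => Ω t / t)
      (a := 0) (b := 1) (μ := MeasureTheory.volume)
      (by rwa [uIcc_of_le zero_le_one, integrableOn_Icc_iff_integrableOn_Ioc])
    rw [uIcc_of_le zero_le_one] at h
    have h0 := h 0 (by simp)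
    have hin : Tendsto (fun ρ : ℝ => k * (1 - ρ) ^ α) (𝓝[<] 1) (𝓝[Icc 0 1] 0) := by
      refine tendsto_nhdsWithin_iff.2 ⟨?_, ?_⟩
      · have : ContinuousAt (fun ρ : ℝ => k * (1 - ρ) ^ α) 1 :=
          continuousAt_const.mul (ContinuousAt.rpow_const (by fun_prop) (Or.inr hα0.le))
        have := this.tendsto
        simp only [sub_self, Real.zero_rpow hα0.ne', mul_zero] at this
        exact this.mono_left nhdsWithin_le_nhds
      · filter_upwards [Ioo_mem_nhdsLT (zero_lt_one (α := ℝ))] with t ht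
        have h0 : 0 ≤ 1 - t := by linarith [ht.2]
        have h1 : (1 - t) ^ α ≤ 1 := Real.rpow_le_one h0 (by linarith [ht.1]) hα0.le
        have h2 : 0 ≤ (1 - t) ^ α := Real.rpow_nonneg h0 α
        exact ⟨by positivity, by nlinarith⟩
    have := (h0.tendsto.comp hin).const_mul (C / α)
    simpa using this
  have hunif : TendstoUniformlyOn (fun (ρ : ℝ) (z : E) => f (ρ • z)) f (𝓝[<] 1) (ball 0 1) := by
    rw [Metric.tendstoUniformlyOn_iff]
    intro ε hε
    filter_upwards [hlim.eventually (gt_mem_nhds hε), Ioo_mem_nhdsLT (zero_lt_one (α := ℝ))]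
      with ρ h1 h2 z hz
    rw [dist_eq_norm]
    exact (norm_sub_radial_le hcont hdini hα0 hf hk hk1 hder hz h2.1 h2.2).trans_lt h1
  refine hunif.uniformContinuousOn (Eventually.frequently ?_)
  filter_upwards [Ioo_mem_nhdsLT (zero_lt_one (α := ℝ))] with ρ hρ
  have hc : ContinuousOn (fun z : E => f (ρ • z)) (closedBall 0 1) := by
    refine hf.continuousOn.comp (by fun_prop) fun z hz => ?_
    rw [mem_closedBall_zero_iff] at hz
    rw [mem_ball_zero_iff, norm_smul, Real.norm_of_nonneg hρ.1.le]
    nlinarith [hρ.1, hρ.2]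
  exact ((isCompact_closedBall (0 : E) 1).uniformContinuousOn_of_continuous hc).mono
    ball_subset_closedBall

/-! ### Continuous extension to the closed ball -/

theorem exists_continuousOn_closedBall {E X : Type*} [NormedAddCommGroup E] [NormedSpace ℂ E]
    [NormedAddCommGroup X] [CompleteSpace X] {f : E → X}
    (hf : UniformContinuousOn f (ball 0 1)) :
    ∃ g : E → X, ContinuousOn g (closedBall 0 1) ∧ ∀ z ∈ ball (0 : E) 1, g z = f z := by
  have hcl : closure (ball (0 : E) 1) = closedBall 0 1 := closure_ball _ one_ne_zero
  refine ⟨extendFrom (ball 0 1) f, continuousOn_extendFrom hcl.ge fun x hx => ?_,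
    fun z hz => extendFrom_extends hf.continuousOn z hz⟩
  have hne : (𝓝[ball 0 1] x).NeBot := mem_closure_iff_nhdsWithin_neBot.1 (hcl.ge hx)
  refine CompleteSpace.complete (⟨hne.map f, ?_⟩ : Cauchy (map f (𝓝[ball 0 1] x)))
  rw [prod_map_map_eq]
  refine hf.mono_left (le_inf ?_ ?_)
  · exact (Filter.prod_mono nhdsWithin_le_nhds nhdsWithin_le_nhds).trans
      ((nhds_prod_eq (x := x) (y := x)).ge.trans (nhds_le_uniformity x))
  · rw [le_principal_iff]
    exact prod_mem_prod self_mem_nhdsWithin self_mem_nhdsWithin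

theorem uniformly_continuous_and_extends
    {X : Type*} [NormedAddCommGroup X] [NormedSpace ℂ X] [CompleteSpace X]
    (n : ℕ) (hn : 1 ≤ n)
    (Ω : ℝ → ℝ) (hΩpos : ∀ δ : ℝ, 0 < δ → 0 < Ω δ)
    (hΩdini : DiniMajorant Ω)
    (hucc : ∀ x y : X, ‖x‖ = 1 → ∀ δ : ℝ, 0 < δ →
      (∀ lam : ℂ, ‖lam‖ ≤ 1 → ‖x + lam • y‖ ≤ 1 + δ) → ‖y‖ ≤ Ω δ)
    (α : ℝ) (hα0 : 0 < α) (hα1 : α ≤ 1)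
    (f : EuclideanSpace ℂ (Fin n) → X)
    (hf : DifferentiableOn ℂ f (Metric.ball 0 1))
    (hΛ : ∃ c : ℝ, ∀ z ∈ Metric.ball (0 : EuclideanSpace ℂ (Fin n)) 1,
      ∀ w ∈ Metric.ball (0 : EuclideanSpace ℂ (Fin n)) 1,
        |‖f z‖ - ‖f w‖| ≤ c * ‖z - w‖ ^ α) :
    UniformContinuousOn f (Metric.ball 0 1) ∧
    ∃ g : EuclideanSpace ℂ (Fin n) → X,
      ContinuousOn g (Metric.closedBall 0 1) ∧
      ∀ z ∈ Metric.ball (0 : EuclideanSpace ℂ (Fin n)) 1, g z = f z := by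
  obtain ⟨c₀, hc₀⟩ := hΛ
  obtain ⟨⟨hcont, -, -, hanti⟩, hΩint⟩ := hΩdini
  have hc : 0 < max c₀ 1 := lt_of_lt_of_le one_pos (le_max_right _ _)
  set c := max c₀ 1 with hcdef
  have hΛ : ∀ z ∈ ball (0 : EuclideanSpace ℂ (Fin n)) 1,
      ∀ w ∈ ball (0 : EuclideanSpace ℂ (Fin n)) 1, |‖f z‖ - ‖f w‖| ≤ c * ‖z - w‖ ^ α :=
    fun z hz w hw => (hc₀ z hz w hw).trans (by gcongr; exact le_max_left _ _)
  set B := ‖f 0‖ + c with hBdef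
  have hB : 0 < B := by positivity
  have hfB : ∀ z ∈ ball (0 : EuclideanSpace ℂ (Fin n)) 1, ‖f z‖ ≤ B := fun z hz => by
    have h1 := (abs_le.1 (hΛ z hz 0 (by simp))).2
    rw [sub_zero] at h1
    have h2 : ‖z‖ ^ α ≤ 1 :=
      Real.rpow_le_one (norm_nonneg z) (mem_ball_zero_iff.1 hz).le hα0.le
    nlinarith
  -- Adding `t` to the modulus keeps every hypothesis and makes it dominate the identity, which
  -- covers the zeros of `f`.
  have hcont' : ContinuousOn (fun t => Ω t + t) (Ici 0) := hcont.add continuousOn_id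
  have hdiv : ∀ t : ℝ, 0 < t → (Ω t + t) / t = Ω t / t + 1 := fun t ht => by
    rw [add_div, div_self ht.ne']
  have hanti' : AntitoneOn (fun t => (Ω t + t) / t) (Ioi 0) := fun a ha b hb hab => by
    simp only [hdiv a ha, hdiv b hb]
    exact add_le_add_left (hanti ha hb hab) 1
  have hΩint' : MeasureTheory.IntegrableOn (fun t => (Ω t + t) / t) (Ioc 0 1) := by
    refine (hΩint.add (MeasureTheory.integrableOn_const (C := (1 : ℝ)) (by simp))).congr_fun
      (fun t ht => (hdiv t ht.1).symm) measurableSet_Ioc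
  have hunif : UniformContinuousOn f (ball 0 1) := by
    refine uniformContinuousOn_ball_of_radial hcont' hΩint' hα0 hf (k := c / B) (C := 4 * B)
      (by positivity) ?_ fun z v r hr hzr hv => ?_
    · rw [div_le_one hB, hBdef]
      linarith [norm_nonneg (f 0)]
    · exact mul_norm_fderiv_le (Ω := fun t => Ω t + t) hanti'
        (fun t ht => by linarith [hΩpos t ht])
        (fun x y hx δ hδ h => (hucc x y hx δ hδ h).trans (by linarith))
        hα0 hf hc hB hfB hΛ hr hzr hv
  exact ⟨hunif, exists_continuousOn_closedBall hunif⟩
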